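/- For every 0 ≤ i ≤ s, the i-th Fitting ideal of the ℤ[G]-module 𝓘_I, i.e. the ideal Fitt_i(M_s(ν_1,…,ν_s,τ_1,…,τ_s)) of ℤ[G] generated by the (s−i)×(s−i) minors of the presentation matrix M_s of 𝓘_I, equals J_i; that is, Fitt_{0,ℤ[G]}(𝓘_I) = (ν_I) and, for 1 ≤ i ≤ s, Fitt_{i,ℤ[G]}(𝓘_I) = Z_i + Z_{i+1}𝓘_I + ⋯ + Z_s𝓘_I^{s−i}. -/

import Mathlib

open MonoidAlgebra Finset

/-- The sum `ν_H = Σ_{σ ∈ H} σ` of the elements of a subgroup `H` in the group algebra. -/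
noncomputable def nuElt (R : Type) [CommRing R] {G : Type} [CommGroup G] [Fintype G]
    (H : Subgroup G) : MonoidAlgebra R G :=
  letI := Classical.decPred (· ∈ H)
  ∑ σ ∈ Finset.univ.filter (· ∈ H), MonoidAlgebra.of R G σ

/-- `Fitt_i(A)`: the ideal generated by the `(n-i) × (n-i)` minors of a matrix `A`
with `n` columns (so `Fitt_i(A) = (1)` for `i ≥ n`, and `(0)` if `A` has fewer than
`n - i` rows). -/
noncomputable def fittMat {R : Type} [CommRing R] {m n : Type} [Fintype m] [Fintype n]
    (A : Matrix m n R) (i : ℕ) : Ideal R :=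
  Ideal.span {x : R |
    ∃ (r : Fin (Fintype.card n - i) → m) (c : Fin (Fintype.card n - i) → n),
      x = (A.submatrix r c).det}

/-- The index type for the rows of `N_s`: pairs `l < l'`. -/
abbrev rowPairs (s : ℕ) := {p : Fin s × Fin s // p.1 < p.2}

/-- The matrix `N_s(t_1, …, t_s)`: row `(l, l')` has `-t_{l'}` in column `l`,
`t_l` in column `l'`, and `0` elsewhere. -/
noncomputable def Nmat {R : Type} [CommRing R] {s : ℕ} (t : Fin s → R) :
    Matrix (rowPairs s) (Fin s) R :=
  fun p l => if l = p.val.1 then -t p.val.2 else if l = p.val.2 then t p.val.1 else 0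

/-- The matrix `M_s(ν_1, …, ν_s, τ_1, …, τ_s)`: `N_s(τ_1, …, τ_s)` with `s` extra rows
appended, the `l`-th of which has `ν_l` in column `l` and `0` elsewhere. -/
noncomputable def Mmat {R : Type} [CommRing R] {s : ℕ} (ν t : Fin s → R) :
    Matrix (Fin s ⊕ rowPairs s) (Fin s) R :=
  Sum.elim (fun l l' => if l' = l then ν l else 0) (Nmat t)

/-- `I = I_1 × ⋯ × I_s` where `I_l` is the (possibly trivial) cyclic subgroup generated
by `σ l`: every element of `I` is, in a unique way, the product of elements of the
subgroups `⟨σ l⟩`. -/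
def IsDecomp {G : Type} [CommGroup G] (I : Subgroup G) {s : ℕ} (σ : Fin s → G) : Prop :=
  (∀ l, σ l ∈ I) ∧
    ∀ g ∈ I, ∃! x : ∀ l, Subgroup.zpowers (σ l), (∏ l, ((x l : G))) = g

/-- The ideal `Z_i` generated by the products `ν_{l_1} ⋯ ν_{l_{s-i}}` over all
`(s-i)`-element subsets `{l_1 < ⋯ < l_{s-i}}` of `{1, …, s}`. -/
noncomputable def Zideal {G : Type} [CommGroup G] [Fintype G] {s : ℕ} (σ : Fin s → G)
    (i : ℕ) : Ideal (MonoidAlgebra ℤ G) :=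
  Ideal.span {x | ∃ T : Finset (Fin s), T.card = s - i ∧
    x = ∏ l ∈ T, nuElt ℤ (Subgroup.zpowers (σ l))}

/-- The augmentation-type kernel ideal `𝓘_H = ker(ℤ[G] → ℤ[G/H])`. -/
noncomputable def kerIdeal {G : Type} [CommGroup G] [Fintype G] (H : Subgroup G) :
    Ideal (MonoidAlgebra ℤ G) :=
  RingHom.ker (MonoidAlgebra.mapDomainRingHom ℤ (QuotientGroup.mk' H))

/-!
Let `ν_l t_l = 0` for all `l`, in any commutative ring.

In the Leibniz expansion of a minor of `M_s(ν, t)`, the factors from the `ν`-rows lie in distinct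
columns and the others lie in `(t_1, …, t_s)`, which gives one inclusion. Conversely, a minor all of
whose rows vanish in some column `x` can be bordered by that column and a row whose entry there is
`± t_l`, and this multiplies it by `± t_l`. A product of `s - i` factors `ν_l` and `t_l` vanishes if
some index occurs in both kinds; otherwise it is built up in this way from the minor given by its
`ν_l`. Every `t_l` uses up one column whose index is that of no `ν`-factor and of no remaining
`t`-factor, and there are enough of these because `i ≥ 1`.

For `i = 0` there is no spare column: `M_s(ν, t)` annihilates the vector `t`, and this kills every
maximal minor that does not contain all the `ν`-rows.

Over `ℤ[G]`, take `t_l = τ_l`: these generate `𝓘_I`, and `ν_1 ⋯ ν_s = ν_I`.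
-/

section Minors

open scoped Matrix

variable {R m n : Type*} [CommRing R]

theorem det_submatrix_cons {k : ℕ} (M : Matrix m n R) (r : Fin k → m) (c : Fin k → n) (ρ : m)
    (x : n) (hr : ∀ a, M (r a) x = 0) :
    (M.submatrix (Fin.cons ρ r : Fin (k + 1) → m) (Fin.cons x c : Fin (k + 1) → n)).det =
      M ρ x * (M.submatrix r c).det := by
  rw [Matrix.det_succ_column_zero, Fin.sum_univ_succ, Finset.sum_eq_zero fun a _ ↦ by simp [hr a]]
  simp only [Fin.val_zero, pow_zero, one_mul, add_zero, Matrix.submatrix_apply, Fin.cons_zero,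
    Matrix.submatrix_submatrix]
  congr 2

theorem det_submatrix_eq_zero_of_not_injective {k : ℕ} (M : Matrix m n R) (r : Fin k → m)
    {c : Fin k → n} (hc : ¬Function.Injective c) : (M.submatrix r c).det = 0 := by
  obtain ⟨a, b, hab, hne⟩ := Function.not_injective_iff.mp hc
  exact Matrix.det_zero_of_column_eq hne fun x ↦ by simp only [Matrix.submatrix_apply, hab]

theorem det_mul_eq_zero_of_mulVec_eq_zero [Fintype n] [DecidableEq n] {A : Matrix n n R}
    {v : n → R} (hv : A *ᵥ v = 0) (l : n) : A.det * v l = 0 := by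
  have hdet : A.det • v = A.adjugate *ᵥ (A *ᵥ v) := by
    rw [Matrix.mulVec_mulVec, Matrix.adjugate_mul, Matrix.smul_mulVec, Matrix.one_mulVec]
  simpa [hv] using congrFun hdet l

/-- The ideal generated by the `k × k` minors of `M` all of whose rows vanish outside the columns
in `A`. The support condition is what allows such minors to be bordered by a column outside `A`. -/
def supportedMinors (M : Matrix m n R) (A : Finset n) (k : ℕ) : Ideal R :=
  Ideal.span {y | ∃ (r : Fin k → m) (c : Fin k → n),
    (∀ a, ∀ x ∉ A, M (r a) x = 0) ∧ y = (M.submatrix r c).det}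

theorem one_mem_supportedMinors_zero (M : Matrix m n R) (A : Finset n) :
    1 ∈ supportedMinors M A 0 :=
  Ideal.subset_span ⟨Fin.elim0, Fin.elim0, fun a ↦ a.elim0, Matrix.det_fin_zero.symm⟩

theorem supportedMinors_mono (M : Matrix m n R) {A B : Finset n} (h : A ⊆ B) (k : ℕ) :
    supportedMinors M A k ≤ supportedMinors M B k := by
  refine Ideal.span_mono ?_
  rintro y ⟨r, c, hr, rfl⟩
  exact ⟨r, c, fun a x hx ↦ hr a x fun hxA ↦ hx (h hxA), rfl⟩

theorem apply_mul_mem_supportedMinors [DecidableEq n] {M : Matrix m n R} {A : Finset n} {k : ℕ}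
    {x : n} (hx : x ∉ A) {ρ : m} (hρ : ∀ z ∉ insert x A, M ρ z = 0) {y : R}
    (hy : y ∈ supportedMinors M A k) : M ρ x * y ∈ supportedMinors M (insert x A) (k + 1) := by
  suffices h : Ideal.span {M ρ x} * supportedMinors M A k ≤ supportedMinors M (insert x A) (k + 1)
    from h (Ideal.mul_mem_mul (Ideal.mem_span_singleton_self _) hy)
  rw [supportedMinors, Ideal.span_mul_span', Ideal.span_le]
  rintro _ ⟨_, rfl, _, ⟨r, c, hr, rfl⟩, rfl⟩
  refine Ideal.subset_span ⟨Fin.cons ρ r, Fin.cons x c, Fin.cases hρ fun a z hz ↦ ?_,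
    (det_submatrix_cons M r c ρ x fun a ↦ hr a x hx).symm⟩
  exact hr a z fun hzA ↦ hz (Finset.mem_insert_of_mem hzA)

end Minors

section FittingIdeal

variable {R m n : Type} [CommRing R] [Fintype m] [Fintype n]

theorem supportedMinors_le_fittMat (M : Matrix m n R) (A : Finset n) (i : ℕ) :
    supportedMinors M A (Fintype.card n - i) ≤ fittMat M i := by
  refine Ideal.span_mono ?_
  rintro y ⟨r, c, -, rfl⟩
  exact ⟨r, c, rfl⟩

theorem det_submatrix_id_mem_fittMat_zero [DecidableEq n] (M : Matrix m n R) (r : n → m) :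
    (M.submatrix r id).det ∈ fittMat M 0 := by
  let e : Fin (Fintype.card n - 0) ≃ n := (Fintype.equivFin n).symm
  refine Ideal.subset_span ⟨r ∘ e, e, ?_⟩
  exact (Matrix.det_submatrix_equiv_self e (M.submatrix r id)).symm

theorem fittMat_zero_le_iff [DecidableEq n] {M : Matrix m n R} {J : Ideal R} :
    fittMat M 0 ≤ J ↔ ∀ r : n → m, (M.submatrix r id).det ∈ J := by
  refine ⟨fun h r ↦ h (det_submatrix_id_mem_fittMat_zero M r), fun h ↦ Ideal.span_le.mpr ?_⟩
  rintro _ ⟨r, c, rfl⟩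
  by_cases hc : Function.Injective c
  · let e := Equiv.ofBijective c
      ((Fintype.bijective_iff_injective_and_card c).mpr ⟨hc, by simp⟩)
    have hdet := Matrix.det_submatrix_equiv_self e (M.submatrix (r ∘ e.symm) id)
    rw [Matrix.submatrix_submatrix, Function.comp_assoc, Equiv.symm_comp_self] at hdet
    exact hdet ▸ h (r ∘ e.symm)
  · rw [det_submatrix_eq_zero_of_not_injective M r hc]
    exact J.zero_mem

end FittingIdeal

section ProductIdeals

variable {R ι : Type*} [CommSemiring R]

/-- The ideal generated by the products of `k` of the elements `ν l` with distinct indices. The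
ideal `Z_i` is the case `k = s - i`. -/
def distinctProdIdeal (ν : ι → R) (k : ℕ) : Ideal R :=
  Ideal.span {x | ∃ T : Finset ι, T.card = k ∧ x = ∏ l ∈ T, ν l}

theorem span_range_pow (t : ι → R) (k : ℕ) :
    Ideal.span (Set.range t) ^ k =
      Ideal.span {x | ∃ L : Multiset ι, L.card = k ∧ x = (L.map t).prod} := by
  induction k with
  | zero => simp [Multiset.card_eq_zero, Ideal.one_eq_top]
  | succ k ih =>
    rw [pow_succ', ih, Ideal.span_mul_span']
    congr 1
    ext x
    constructor
    · rintro ⟨_, ⟨l, rfl⟩, _, ⟨L, hL, rfl⟩, rfl⟩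
      exact ⟨l ::ₘ L, by simp [hL], by simp⟩
    · rintro ⟨L, hL, rfl⟩
      obtain ⟨l, L, rfl, rfl⟩ := Multiset.card_eq_succ_iff.mp hL
      exact ⟨t l, ⟨l, rfl⟩, (L.map t).prod, ⟨L, rfl, rfl⟩, by simp⟩

theorem prod_mul_multiset_prod_eq_zero {ν t : ι → R} {l : ι} (hν : ν l * t l = 0) {T : Finset ι}
    {L : Multiset ι} (hT : l ∈ T) (hL : l ∈ L) :
    (∏ l ∈ T, ν l) * (L.map t).prod = 0 := by
  have hdvd := mul_dvd_mul (Finset.dvd_prod_of_mem ν hT)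
    (Multiset.dvd_prod (Multiset.mem_map_of_mem t hL))
  rwa [hν, zero_dvd_iff] at hdvd

end ProductIdeals

section PresentationMatrix

open scoped Matrix

variable {R : Type} [CommRing R] {s : ℕ}

theorem Nmat_eq_single_sub_single (t : Fin s → R) (q : rowPairs s) :
    Nmat t q = Pi.single q.1.2 (t q.1.1) - Pi.single q.1.1 (t q.1.2) := by
  have hne := q.2.ne
  ext l
  simp only [Nmat, Pi.sub_apply, Pi.single_apply]
  split_ifs <;> simp_all

theorem Mmat_inl (ν t : Fin s → R) (l : Fin s) : Mmat ν t (Sum.inl l) = Pi.single l (ν l) := by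
  ext x
  rw [Pi.single_apply]
  rfl

theorem Mmat_inr (ν t : Fin s → R) (q : rowPairs s) :
    Mmat ν t (Sum.inr q) = Pi.single q.1.2 (t q.1.1) - Pi.single q.1.1 (t q.1.2) :=
  Nmat_eq_single_sub_single t q

theorem Mmat_submatrix_inl (ν t : Fin s → R) :
    (Mmat ν t).submatrix Sum.inl id = Matrix.diagonal ν := by
  ext l x
  simp [Mmat_inl, Matrix.diagonal_apply, Pi.single_apply, eq_comm]

theorem Mmat_map {S : Type} [CommRing S] (f : R →+* S) (ν t : Fin s → R) :
    (Mmat ν t).map f = Mmat (f ∘ ν) (f ∘ t) := by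
  ext (l | q) x <;> simp [Mmat_inl, Mmat_inr, Pi.single_apply, apply_ite f]

theorem Mmat_mulVec (ν t : Fin s → R) :
    Mmat ν t *ᵥ t = Sum.elim (fun l ↦ ν l * t l) 0 := by
  ext (l | q)
  · simp [Matrix.mulVec, Mmat_inl]
  · change Mmat ν t (Sum.inr q) ⬝ᵥ t = 0
    rw [Mmat_inr, sub_dotProduct, single_dotProduct, single_dotProduct, mul_comm, sub_self]

theorem dvd_Mmat_inl (ν t : Fin s → R) (l x : Fin s) : ν x ∣ Mmat ν t (Sum.inl l) x := by
  rw [Mmat_inl, Pi.single_apply]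
  split_ifs with h
  · rw [h]
  · exact dvd_zero _

theorem Mmat_inr_mem_span_range (ν t : Fin s → R) (q : rowPairs s) (x : Fin s) :
    Mmat ν t (Sum.inr q) x ∈ Ideal.span (Set.range t) := by
  have ht (l : Fin s) : t l ∈ Ideal.span (Set.range t) := Ideal.subset_span ⟨l, rfl⟩
  rw [Mmat_inr, Pi.sub_apply, Pi.single_apply, Pi.single_apply]
  refine sub_mem ?_ ?_ <;> split_ifs <;> simp [ht]

theorem exists_prod_Mmat_mem {κ : Type*} [Fintype κ] (ν t : Fin s → R)
    (r : κ → Fin s ⊕ rowPairs s) {c : κ → Fin s} (hc : Function.Injective c) :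
    ∃ j ≤ Fintype.card κ, ∏ a, Mmat ν t (r a) (c a) ∈
      distinctProdIdeal ν (Fintype.card κ - j) * Ideal.span (Set.range t) ^ j := by
  classical
  let B : Finset κ := {a | (r a).isLeft}
  have hB : ∏ a ∈ B, Mmat ν t (r a) (c a) ∈ distinctProdIdeal ν B.card := by
    have hdvd : ∏ a ∈ B, ν (c a) ∣ ∏ a ∈ B, Mmat ν t (r a) (c a) := by
      refine Finset.prod_dvd_prod_of_dvd _ _ fun a ha ↦ ?_
      obtain ⟨l, hl⟩ := Sum.isLeft_iff.mp (Finset.mem_filter.mp ha).2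
      exact hl ▸ dvd_Mmat_inl ν t l (c a)
    refine Ideal.mem_of_dvd _ hdvd (Ideal.subset_span ⟨B.image c, ?_, ?_⟩)
    · exact Finset.card_image_of_injective B hc
    · rw [Finset.prod_image hc.injOn]
  have hBc : ∏ a ∈ Bᶜ, Mmat ν t (r a) (c a) ∈ Ideal.span (Set.range t) ^ Bᶜ.card := by
    rw [← Finset.prod_const]
    refine Ideal.prod_mem_prod fun a ha ↦ ?_
    obtain ⟨q, hq⟩ := Sum.isRight_iff.mp (by simpa [B] using ha)
    exact hq ▸ Mmat_inr_mem_span_range ν t q (c a)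
  refine ⟨Bᶜ.card, Finset.card_le_univ _, ?_⟩
  rw [← Finset.prod_mul_prod_compl B, ← Finset.card_compl, compl_compl]
  exact Ideal.mul_mem_mul hB hBc

theorem fittMat_Mmat_le (ν t : Fin s → R) (i : ℕ) :
    fittMat (Mmat ν t) i ≤ ∑ j ∈ range (s - i + 1),
      distinctProdIdeal ν (s - (i + j)) * Ideal.span (Set.range t) ^ j := by
  refine Ideal.span_le.mpr ?_
  rintro _ ⟨r, c, rfl⟩
  by_cases hc : Function.Injective c
  · rw [Matrix.det_apply', Ideal.sum_eq_sup]
    refine Ideal.sum_mem _ fun p _ ↦ Ideal.mul_mem_left _ _ ?_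
    obtain ⟨j, hj, hmem⟩ := exists_prod_Mmat_mem ν t (r ∘ p) hc
    simp only [Fintype.card_fin, Nat.sub_sub] at hj hmem
    exact Finset.le_sup (f := fun j ↦ distinctProdIdeal ν (s - (i + j)) * _ ^ j)
      (Finset.mem_range_succ_iff.mpr hj) hmem
  · rw [det_submatrix_eq_zero_of_not_injective _ r hc]
    exact zero_mem _

theorem prod_mem_supportedMinors (ν t : Fin s → R) (T : Finset (Fin s)) :
    ∏ l ∈ T, ν l ∈ supportedMinors (Mmat ν t) T T.card := by
  induction T using Finset.induction_on with
  | empty => simpa using one_mem_supportedMinors_zero (Mmat ν t) ∅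
  | insert x T hx ih =>
    have hrow : ∀ z ∉ insert x T, Mmat ν t (Sum.inl x) z = 0 := fun z hz ↦ by
      rw [Mmat_inl, Pi.single_eq_of_ne (ne_of_mem_of_not_mem (Finset.mem_insert_self x T) hz).symm]
    rw [Finset.prod_insert hx, Finset.card_insert_of_notMem hx]
    simpa [Mmat_inl] using apply_mul_mem_supportedMinors hx hrow ih

theorem mul_mem_supportedMinors_insert {ν t : Fin s → R} {A : Finset (Fin s)} {k : ℕ}
    {x l : Fin s} (hx : x ∉ A) (hl : l ∈ A) {y : R} (hy : y ∈ supportedMinors (Mmat ν t) A k) :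
    t l * y ∈ supportedMinors (Mmat ν t) (insert x A) (k + 1) := by
  have hxl : x ≠ l := fun h ↦ hx (h ▸ hl)
  have hne {z : Fin s} (hz : z ∉ insert x A) : z ≠ x ∧ z ≠ l :=
    ⟨fun h ↦ hz (h ▸ Finset.mem_insert_self x A), fun h ↦ hz (h ▸ Finset.mem_insert_of_mem hl)⟩
  rcases hxl.lt_or_gt with h | h
  · have hrow : ∀ z ∉ insert x A, Mmat ν t (Sum.inr ⟨(x, l), h⟩) z = 0 := fun z hz ↦ by
      simp [Mmat_inr, hne hz]
    simpa [Mmat_inr, hxl] using apply_mul_mem_supportedMinors hx hrow hy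
  · have hrow : ∀ z ∉ insert x A, Mmat ν t (Sum.inr ⟨(l, x), h⟩) z = 0 := fun z hz ↦ by
      simp [Mmat_inr, hne hz]
    simpa [Mmat_inr, hxl] using apply_mul_mem_supportedMinors hx hrow hy

theorem mul_multiset_prod_mem_supportedMinors {ν t : Fin s → R} {A : Finset (Fin s)} {k : ℕ}
    {y : R} (hy : y ∈ supportedMinors (Mmat ν t) A k) (L : Multiset (Fin s))
    (V : Finset (Fin s)) (hAV : Disjoint A V) (hLV : ∀ l ∈ L, l ∈ V) (hcard : L.card < V.card) :
    (L.map t).prod * y ∈ supportedMinors (Mmat ν t) (A ∪ V) (k + L.card) := by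
  induction L using Multiset.induction_on generalizing V with
  | empty => simpa using supportedMinors_mono _ Finset.subset_union_left _ hy
  | cons l L ih =>
    obtain ⟨x, hxV, hxL⟩ : ∃ x ∈ V, x ∉ (l ::ₘ L).toFinset :=
      Finset.exists_mem_notMem_of_card_lt_card ((Multiset.toFinset_card_le _).trans_lt hcard)
    simp only [Multiset.mem_toFinset, Multiset.mem_cons, not_or] at hxL
    simp only [Multiset.mem_cons, forall_eq_or_imp] at hLV
    rw [Multiset.card_cons] at hcard
    have hmem : (L.map t).prod * y ∈ supportedMinors (Mmat ν t) (A ∪ V.erase x) (k + L.card) := by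
      refine ih (V.erase x) (hAV.mono_right (Finset.erase_subset x V)) (fun z hz ↦ ?_) ?_
      · exact Finset.mem_erase.mpr ⟨fun h ↦ hxL.2 (h ▸ hz), hLV.2 z hz⟩
      · rw [Finset.card_erase_of_mem hxV]
        lia
    have hx : x ∉ A ∪ V.erase x := by simp [Finset.disjoint_right.mp hAV hxV]
    have hl : l ∈ A ∪ V.erase x := by simp [hLV.1, Ne.symm hxL.1]
    have hunion : insert x (A ∪ V.erase x) = A ∪ V := by
      rw [← Finset.union_insert, Finset.insert_erase hxV]
    rw [Multiset.map_cons, Multiset.prod_cons, mul_assoc, Multiset.card_cons, ← hunion]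
    exact mul_mem_supportedMinors_insert hx hl hmem

theorem distinctProdIdeal_mul_le_fittMat_Mmat {ν t : Fin s → R} (hν : ∀ l, ν l * t l = 0)
    {i j : ℕ} (hi : 1 ≤ i) (hij : i + j ≤ s) :
    distinctProdIdeal ν (s - (i + j)) * Ideal.span (Set.range t) ^ j ≤ fittMat (Mmat ν t) i := by
  rw [distinctProdIdeal, span_range_pow, Ideal.span_mul_span', Ideal.span_le]
  rintro _ ⟨_, ⟨T, hT, rfl⟩, _, ⟨L, hL, rfl⟩, rfl⟩
  by_cases hTL : ∃ l ∈ L, l ∈ T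
  · obtain ⟨l, hlL, hlT⟩ := hTL
    simp [prod_mul_multiset_prod_eq_zero (hν l) hlT hlL]
  · have hmem := mul_multiset_prod_mem_supportedMinors (prod_mem_supportedMinors ν t T) L Tᶜ
      disjoint_compl_right (fun l hl ↦ by simpa using fun hlT ↦ hTL ⟨l, hl, hlT⟩)
      (by rw [Finset.card_compl, Fintype.card_fin]; lia)
    have hcard : T.card + L.card = Fintype.card (Fin s) - i := by rw [Fintype.card_fin]; lia
    rw [mul_comm, hcard] at hmem
    exact supportedMinors_le_fittMat _ _ i hmem

theorem fittMat_Mmat {ν t : Fin s → R} (hν : ∀ l, ν l * t l = 0) {i : ℕ} (h1 : 1 ≤ i)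
    (hi : i ≤ s) :
    fittMat (Mmat ν t) i = ∑ j ∈ range (s - i + 1),
      distinctProdIdeal ν (s - (i + j)) * Ideal.span (Set.range t) ^ j := by
  refine (fittMat_Mmat_le ν t i).antisymm ?_
  rw [Ideal.sum_eq_sup]
  refine Finset.sup_le fun j hj ↦ distinctProdIdeal_mul_le_fittMat_Mmat hν h1 ?_
  have := Finset.mem_range_succ_iff.mp hj
  lia

open Polynomial in
theorem det_submatrix_Mmat_eq_zero {ν t : Fin s → R} (hν : ∀ l, ν l * t l = 0)
    (r : Fin s → Fin s ⊕ rowPairs s) {l₀ : Fin s} (hl₀ : ∀ a, r a ≠ Sum.inl l₀) :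
    ((Mmat ν t).submatrix r id).det = 0 := by
  -- `t l₀` may be a zero divisor, so we deform it to an indeterminate.
  let t' : Fin s → R[X] := Function.update (C ∘ t) l₀ X
  let A : Matrix (Fin s) (Fin s) R[X] := (Mmat (C ∘ ν) t').submatrix r id
  have hAt : A *ᵥ t' = 0 := by
    ext1 a
    change (Mmat (C ∘ ν) t' *ᵥ t') (r a) = 0
    rw [Mmat_mulVec]
    rcases hra : r a with l | q
    · have hl : l ≠ l₀ := fun h ↦ hl₀ a (h ▸ hra)
      simp [t', hl, ← C_mul, hν l]
    · rfl
  have hA : A.det = 0 := by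
    have hX : A.det * X = 0 := by
      simpa only [t', Function.update_self] using det_mul_eq_zero_of_mulVec_eq_zero hAt l₀
    exact isRegular_X.right.mul_right_eq_zero_iff.mp hX
  have heval : (evalRingHom (t l₀)).mapMatrix A = (Mmat ν t).submatrix r id := by
    have ht : evalRingHom (t l₀) ∘ t' = t := by
      ext l
      rcases eq_or_ne l l₀ with rfl | h <;> simp [t', *]
    have hν' : evalRingHom (t l₀) ∘ C ∘ ν = ν := by ext l; simp
    rw [RingHom.mapMatrix_apply, ← Matrix.submatrix_map, Mmat_map, ht, hν']
  rw [← heval, ← RingHom.map_det, hA, map_zero]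

theorem fittMat_Mmat_zero {ν t : Fin s → R} (hν : ∀ l, ν l * t l = 0) :
    fittMat (Mmat ν t) 0 = Ideal.span {∏ l, ν l} := by
  have hinl : ((Mmat ν t).submatrix Sum.inl id).det = ∏ l, ν l := by
    rw [Mmat_submatrix_inl, Matrix.det_diagonal]
  refine le_antisymm (fittMat_zero_le_iff.mpr fun r ↦ ?_) ?_
  · by_cases hr : ∀ l, ∃ a, r a = Sum.inl l
    · choose g hg using hr
      have hg_inj : Function.Injective g := fun x y h ↦ Sum.inl_injective (by rw [← hg, h, hg])
      let e := Equiv.ofBijective g (Finite.injective_iff_bijective.mp hg_inj)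
      have hr : r = Sum.inl ∘ e.symm := (e.eq_comp_symm r Sum.inl).mpr (funext hg)
      have hdet := Matrix.det_permute e.symm ((Mmat ν t).submatrix Sum.inl id)
      rw [Matrix.submatrix_submatrix, Function.comp_id, ← hr, hinl] at hdet
      exact hdet ▸ Ideal.mul_mem_left _ _ (Ideal.mem_span_singleton_self _)
    · push Not at hr
      obtain ⟨l₀, hl₀⟩ := hr
      exact (det_submatrix_Mmat_eq_zero hν r hl₀).symm ▸ zero_mem _
  · rw [Ideal.span_singleton_le_iff_mem, ← hinl]
    exact det_submatrix_id_mem_fittMat_zero _ _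

end PresentationMatrix

section Norms

variable (R : Type) [CommRing R] {G : Type} [CommGroup G] [Fintype G]

theorem nuElt_eq_sum (H : Subgroup G) [Fintype H] :
    nuElt R H = ∑ x : H, MonoidAlgebra.of R G x := by
  classical
  exact Finset.sum_subtype _ (fun x ↦ by simp) _

theorem nuElt_mul_of_sub_one {H : Subgroup G} {g : G} (hg : g ∈ H) :
    nuElt R H * (MonoidAlgebra.of R G g - 1) = 0 := by
  classical
  rw [nuElt_eq_sum, mul_sub, mul_one, sub_eq_zero, Finset.sum_mul]
  refine Fintype.sum_equiv (Equiv.mulRight (⟨g, hg⟩ : H)) _ _ fun x ↦ ?_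
  exact (map_mul (MonoidAlgebra.of R G) (x : G) g).symm

theorem prod_nuElt {ι : Type*} [Fintype ι] {H : ι → Subgroup G} {I : Subgroup G}
    (h : Set.BijOn (fun x : ∀ l, H l ↦ ∏ l, (x l : G)) Set.univ I) :
    ∏ l, nuElt R (H l) = nuElt R I := by
  classical
  simp only [nuElt_eq_sum, Fintype.prod_sum]
  refine Fintype.sum_equiv ((Equiv.Set.univ _).symm.trans (h.equiv _)) _ _ fun x ↦ ?_
  exact (map_prod (MonoidAlgebra.of R G) (fun l ↦ (x l : G)) Finset.univ).symm

end Norms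

section Kernel

theorem of_sub_one_mem_of_mem_closure {R G : Type*} [Ring R] [Group G]
    {J : Ideal (MonoidAlgebra R G)} {S : Set G} (hS : ∀ g ∈ S, MonoidAlgebra.of R G g - 1 ∈ J)
    {g : G} (hg : g ∈ Subgroup.closure S) : MonoidAlgebra.of R G g - 1 ∈ J := by
  induction hg using Subgroup.closure_induction with
  | mem g hg => exact hS g hg
  | one => simp only [map_one, sub_self, zero_mem]
  | mul g h _ _ hg hh =>
    have hgh : MonoidAlgebra.of R G (g * h) - 1 = MonoidAlgebra.of R G g *
        (MonoidAlgebra.of R G h - 1) + (MonoidAlgebra.of R G g - 1) := by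
      rw [map_mul, mul_sub, mul_one, sub_add_sub_cancel]
    exact hgh ▸ add_mem (J.mul_mem_left _ hh) hg
  | inv g _ hg =>
    have hinv : MonoidAlgebra.of R G g⁻¹ - 1 =
        -(MonoidAlgebra.of R G g⁻¹ * (MonoidAlgebra.of R G g - 1)) := by
      rw [mul_sub, ← map_mul, inv_mul_cancel, map_one, mul_one, neg_sub]
    exact hinv ▸ neg_mem (J.mul_mem_left _ hg)

variable {R G : Type*} [CommRing R] [CommGroup G]

theorem ker_mapDomainRingHom_mk'_le {H : Subgroup G} {J : Ideal (MonoidAlgebra R G)}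
    (hJ : ∀ g ∈ H, MonoidAlgebra.of R G g - 1 ∈ J) :
    RingHom.ker (MonoidAlgebra.mapDomainRingHom R (QuotientGroup.mk' H)) ≤ J := by
  let f : G →* MonoidAlgebra R G ⧸ J :=
    (Ideal.Quotient.mk J : MonoidAlgebra R G →* _).comp (MonoidAlgebra.of R G)
  have hf : H ≤ f.ker := fun g hg ↦ Ideal.Quotient.eq.mpr (hJ g hg)
  let χ : MonoidAlgebra R (G ⧸ H) →ₐ[R] MonoidAlgebra R G ⧸ J :=
    MonoidAlgebra.lift R _ _ (QuotientGroup.lift H f hf)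
  have hχ : χ.comp (MonoidAlgebra.mapDomainAlgHom R R (QuotientGroup.mk' H)) =
      Ideal.Quotient.mkₐ R J := by
    ext g
    simp [χ, f]
  intro x hx
  have hx' : Ideal.Quotient.mk J x = χ (MonoidAlgebra.mapDomainRingHom R _ x) :=
    (DFunLike.congr_fun hχ x).symm
  rw [← Ideal.Quotient.eq_zero_iff_mem, hx', RingHom.mem_ker.mp hx, map_zero]

theorem ker_mapDomainRingHom_mk'_closure_range {ι : Type*} (σ : ι → G) :
    RingHom.ker (MonoidAlgebra.mapDomainRingHom R
        (QuotientGroup.mk' (Subgroup.closure (Set.range σ)))) =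
      Ideal.span (Set.range fun l ↦ MonoidAlgebra.of R G (σ l) - 1) := by
  refine le_antisymm (ker_mapDomainRingHom_mk'_le fun g hg ↦ ?_) (Ideal.span_le.mpr ?_)
  · refine of_sub_one_mem_of_mem_closure (Set.forall_mem_range.mpr fun l ↦ ?_) hg
    exact Ideal.subset_span (Set.mem_range_self l)
  · rintro _ ⟨l, rfl⟩
    have hσ : (σ l : G ⧸ Subgroup.closure (Set.range σ)) = 1 :=
      (QuotientGroup.eq_one_iff (σ l)).mpr (Subgroup.subset_closure (Set.mem_range_self l))
    have hof : MonoidAlgebra.mapDomainRingHom R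
        (QuotientGroup.mk' (Subgroup.closure (Set.range σ))) (MonoidAlgebra.of R G (σ l)) = 1 := by
      simp [hσ, MonoidAlgebra.one_def]
    exact RingHom.mem_ker.mpr (by rw [map_sub, map_one, hof, sub_self])

end Kernel

theorem Zideal_eq_distinctProdIdeal {G : Type} [CommGroup G] [Fintype G] {s : ℕ} (σ : Fin s → G)
    (i : ℕ) :
    Zideal σ i = distinctProdIdeal (fun l ↦ nuElt ℤ (Subgroup.zpowers (σ l))) (s - i) :=
  rfl

namespace IsDecomp

variable {G : Type} [CommGroup G] {I : Subgroup G} {s : ℕ} {σ : Fin s → G}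

theorem prod_mem (hdec : IsDecomp I σ) (x : ∀ l, Subgroup.zpowers (σ l)) :
    ∏ l, (x l : G) ∈ I :=
  Subgroup.prod_mem _ fun l _ ↦ Subgroup.zpowers_le.mpr (hdec.1 l) (x l).2

theorem bijOn (hdec : IsDecomp I σ) :
    Set.BijOn (fun x : ∀ l, Subgroup.zpowers (σ l) ↦ ∏ l, (x l : G)) Set.univ I := by
  refine ⟨fun x _ ↦ hdec.prod_mem x, fun x _ y _ hxy ↦ ?_, fun g hg ↦ ?_⟩
  · exact (hdec.2 _ (hdec.prod_mem y)).unique hxy rfl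
  · obtain ⟨x, hx, -⟩ := hdec.2 g hg
    exact ⟨x, trivial, hx⟩

theorem closure_range (hdec : IsDecomp I σ) : Subgroup.closure (Set.range σ) = I := by
  refine le_antisymm ((Subgroup.closure_le _).mpr (Set.range_subset_iff.mpr hdec.1)) fun g hg ↦ ?_
  obtain ⟨x, rfl, -⟩ := hdec.2 g hg
  refine Subgroup.prod_mem _ fun l _ ↦ Subgroup.zpowers_le.mpr ?_ (x l).2
  exact Subgroup.subset_closure ⟨l, rfl⟩

theorem kerIdeal_eq_span [Fintype G] (hdec : IsDecomp I σ) :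
    kerIdeal I = Ideal.span (Set.range fun l ↦ MonoidAlgebra.of ℤ G (σ l) - 1) := by
  rw [← hdec.closure_range, kerIdeal, ker_mapDomainRingHom_mk'_closure_range]

end IsDecomp

/-- `Fitt_{i,ℤ[G]}(𝓘_I) = J_i` for `0 ≤ i ≤ s`, where the `i`-th Fitting
ideal of `𝓘_I` is computed as `Fitt_i` of the presentation matrix
`M_s(ν_1, …, ν_s, τ_1, …, τ_s)` of `𝓘_I`: it is `(ν_I)` for `i = 0` and
`Σ_{j=0}^{s-i} Z_{i+j} 𝓘_I^j` for `1 ≤ i ≤ s`. -/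
theorem statement1 {G : Type} [CommGroup G] [Fintype G] (I : Subgroup G)
    {s : ℕ} (σ : Fin s → G) (hdec : IsDecomp I σ) :
    fittMat (Mmat (fun l => nuElt ℤ (Subgroup.zpowers (σ l)))
        (fun l => MonoidAlgebra.of ℤ G (σ l) - 1)) 0
      = Ideal.span {nuElt ℤ I} ∧
    ∀ i : ℕ, 1 ≤ i → i ≤ s →
      fittMat (Mmat (fun l => nuElt ℤ (Subgroup.zpowers (σ l)))
          (fun l => MonoidAlgebra.of ℤ G (σ l) - 1)) i
        = ∑ j ∈ Finset.range (s - i + 1), Zideal σ (i + j) * (kerIdeal I) ^ j := by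
  have hν (l : Fin s) :
      nuElt ℤ (Subgroup.zpowers (σ l)) * (MonoidAlgebra.of ℤ G (σ l) - 1) = 0 :=
    nuElt_mul_of_sub_one ℤ (Subgroup.mem_zpowers (σ l))
  refine ⟨?_, fun i h1 hi ↦ ?_⟩
  · rw [fittMat_Mmat_zero hν, prod_nuElt ℤ hdec.bijOn]
  · rw [fittMat_Mmat hν h1 hi, hdec.kerIdeal_eq_span]
    simp only [Zideal_eq_distinctProdIdeal]
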